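/- arXiv:2007.10924 — 2 statements merged into one kernel-verified Lean document; each statement's English description precedes it below -/
import Mathlib

section
/- Let n ≥ 1, let f : D → {0,1} be an n-bit partial Boolean function, and let β = (β_0, β_1, …, β_n) ∈ ℝ^{n+1} satisfy β_i ≥ 0 for all i, β_0 + β_1 + ⋯ + β_n = 1, and β_0 + Σ_{i=1}^{n} β_i·(−1)^{x_i ⊕ y_i} = 0 for every x ∈ D with f(x) = 0 and every y ∈ D with f(y) = 1. If k ∈ {1,…,n} and there exist X, X' ∈ D that differ exactly in the k-th coordinate and satisfy f(X) ≠ f(X'), then β_k = 1/2. -/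
open scoped BigOperators

noncomputable section

/-- The quantum oracle `O_x`, as a diagonal matrix acting on `ℂ^{(n+1)m}`, whose basis
vectors are indexed by pairs `(i, j)` with `i ∈ {0, 1, …, n}` (encoded as `Option (Fin n)`,
`none` playing the role of `0`) and `j ∈ {1, …, m}`. -/
def oracleMat (n m : ℕ) (x : Fin n → Bool) :
    Matrix (Option (Fin n) × Fin m) (Option (Fin n) × Fin m) ℂ :=
  Matrix.diagonal fun p =>
    match p.1 with
    | none => 1
    | some i => if x i then -1 else 1

/-- Squared Euclidean norm of a complex vector. -/
def vecNormSq {ι : Type*} [Fintype ι] (v : ι → ℂ) : ℝ :=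
  ∑ i, Complex.normSq (v i)

/-- The partial Boolean function `f` with domain (promised set) `D` is computed exactly by a
quantum 1-query algorithm: there are `m ≥ 1`, a unit vector `ψ`, unitaries `U₀, U₁` and an
orthogonal projection `P` with `‖P U₁ O_x U₀ ψ‖² = f x` for all `x ∈ D`. -/
def ComputedExactly1 {n : ℕ} (D : Set (Fin n → Bool)) (f : (Fin n → Bool) → Bool) : Prop :=
  ∃ m : ℕ, 1 ≤ m ∧
    ∃ ψ : Option (Fin n) × Fin m → ℂ, vecNormSq ψ = 1 ∧
      ∃ U₀ U₁ P : Matrix (Option (Fin n) × Fin m) (Option (Fin n) × Fin m) ℂ,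
        U₀ ∈ Matrix.unitaryGroup (Option (Fin n) × Fin m) ℂ ∧
        U₁ ∈ Matrix.unitaryGroup (Option (Fin n) × Fin m) ℂ ∧
        P.IsHermitian ∧ P * P = P ∧
        ∀ x ∈ D, vecNormSq ((P * U₁ * oracleMat n m x * U₀).mulVec ψ) = if f x then 1 else 0

/-- A multilinear polynomial: degree at most 1 in each variable. -/
def IsMultilinear {n : ℕ} (p : MvPolynomial (Fin n) ℝ) : Prop :=
  ∀ i, p.degreeOf i ≤ 1

/-- `p` represents the partial Boolean function `f` on the promised set `D`. -/
def Represents {n : ℕ} (p : MvPolynomial (Fin n) ℝ)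
    (D : Set (Fin n → Bool)) (f : (Fin n → Bool) → Bool) : Prop :=
  ∀ x ∈ D, MvPolynomial.eval (fun i => if x i then (1 : ℝ) else 0) p = if f x then 1 else 0

/-- `f` (with domain `D`) depends on `k` bits: `k` is the minimum, over all multilinear
polynomials representing `f`, of the number of variables occurring. -/
def DependsOnBits {n : ℕ} (D : Set (Fin n → Bool)) (f : (Fin n → Bool) → Bool) (k : ℕ) : Prop :=
  IsLeast {c | ∃ p : MvPolynomial (Fin n) ℝ,
    IsMultilinear p ∧ Represents p D f ∧ p.vars.card = c} k

/-- The Fourier basis vector `|F(x)⟩₁ = (1, (−1)^{x_1}, …, (−1)^{x_n})`. -/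
def fourierVec {n : ℕ} (x : Fin n → Bool) : Option (Fin n) → ℂ :=
  fun o => match o with
  | none => 1
  | some i => if x i then -1 else 1

/-- The polynomial basis vector `(1, x₁, …, xₙ)`. -/
def polyVec {n : ℕ} (x : Fin n → Bool) : Option (Fin n) → ℝ :=
  fun o => match o with
  | none => 1
  | some i => if x i then 1 else 0

/-- A degree-1 SOS complex representation matrix of `f` and its negation, given by the
rows `α l` (`l < p` for `f`, `p ≤ l < p + q` for the negation of `f`). -/
def SOSRep {n : ℕ} (D : Set (Fin n → Bool)) (f : (Fin n → Bool) → Bool)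
    (p q : ℕ) (α : Fin (p + q) → Option (Fin n) → ℂ) : Prop :=
  (∀ x ∈ D, ∑ l : Fin p,
      Complex.normSq (∑ i, (starRingEnd ℂ) (α (Fin.castAdd q l) i) * fourierVec x i)
      = if f x then 1 else 0) ∧
  (∀ x ∈ D, ∑ l : Fin q,
      Complex.normSq (∑ i, (starRingEnd ℂ) (α (Fin.natAdd p l) i) * fourierVec x i)
      = if f x then 0 else 1) ∧
  (∀ x : Fin n → Bool, ∑ l : Fin (p + q),
      Complex.normSq (∑ i, (starRingEnd ℂ) (α l i) * fourierVec x i) = 1)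

/-- `rank(G_f(1,b))`: the dimension of the real span of the vectors `(1, x₁, …, xₙ)`
over all `x ∈ D` with `f x = b`. -/
def rankG {n : ℕ} (D : Set (Fin n → Bool)) (f : (Fin n → Bool) → Bool) (b : Bool) : ℕ :=
  Module.finrank ℝ (Submodule.span ℝ (polyVec '' {x ∈ D | f x = b}))

end

theorem stmt_2 (n : ℕ) (hn : 1 ≤ n) (D : Set (Fin n → Bool)) (f : (Fin n → Bool) → Bool)
    (β : Option (Fin n) → ℝ) (hβnn : ∀ i, 0 ≤ β i) (hβsum : (∑ i, β i) = 1)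
    (hβorth : ∀ x ∈ D, f x = false → ∀ y ∈ D, f y = true →
      β none + ∑ i : Fin n, β (some i) * (if x i = y i then 1 else -1) = 0)
    (k : Fin n) (X : Fin n → Bool) (hX : X ∈ D)
    (hX' : Function.update X k (!(X k)) ∈ D)
    (hne : f X ≠ f (Function.update X k (!(X k)))) :
    β (some k) = 1 / 2 := by
  have key : β none + ∑ i : Fin n,
      β (some i) * (if X i = Function.update X k (!(X k)) i then 1 else -1) = 0 := by
    cases h1 : f X with
    | false =>
      cases h2 : f (Function.update X k (!(X k))) with
      | false => exact absurd (h1.trans h2.symm) hne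
      | true => exact hβorth _ hX h1 _ hX' h2
    | true =>
      cases h2 : f (Function.update X k (!(X k))) with
      | true => exact absurd (h1.trans h2.symm) hne
      | false =>
        have h := hβorth _ hX' h2 _ hX h1
        simpa only [eq_comm] using h
  have h3 : ∀ i : Fin n,
      β (some i) * (if X i = Function.update X k (!(X k)) i then (1 : ℝ) else -1)
        = β (some i) - (if i = k then 2 * β (some i) else 0) := by
    intro i
    by_cases hi : i = k
    · subst hi
      simp
      ring
    · simp [Function.update_of_ne hi, hi]
  rw [Finset.sum_congr rfl (fun i _ => h3 i), Finset.sum_sub_distrib] at key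
  rw [Fintype.sum_option] at hβsum
  simp at key
  linarith
end

section
/- For all n ≥ 3 and 2 ≤ k ≤ n, the number of n-bit partial Boolean functions that depend on k bits and can be computed exactly by a quantum 1-query algorithm is at most n²·2^{2^{n−1}(1+2^{2−k}) + 2n²}. Here n-bit partial Boolean functions are identified with maps F : {0,1}^n → {0,1,*}, the domain D of the partial Boolean function being the set of inputs not mapped to *. -/
open scoped BigOperators

noncomputable section

/-- The real sign vector `(1, (-1)^{x_1}, ..., (-1)^{x_n})`. -/
def rv {n : ℕ} (x : Fin n → Bool) : Option (Fin n) → ℝ :=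
  fun o => o.elim 1 (fun i => if x i then -1 else 1)

lemma rv_cases {n : ℕ} (x : Fin n → Bool) (o : Option (Fin n)) : rv x o = 1 ∨ rv x o = -1 := by
  cases o with
  | none => left; rfl
  | some i => by_cases h : x i <;> simp [rv, h]

lemma rv_sq {n : ℕ} (x : Fin n → Bool) (o : Option (Fin n)) : rv x o * rv x o = 1 := by
  rcases rv_cases x o with h | h <;> simp [h]

lemma rv_some_inj {n : ℕ} {x y : Fin n → Bool} {i : Fin n}
    (h : rv x (some i) = rv y (some i)) : x i = y i := by
  cases hx : x i <;> cases hy : y i <;> simp [rv, hx, hy] at h ⊢ <;> norm_num at h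

lemma rv_injective {n : ℕ} : Function.Injective (rv (n := n)) := by
  intro x y h
  funext i
  exact rv_some_inj (congrFun h _)

/-- The number of sign vectors in a subspace of dimension `d` (Odlyzko). -/
lemma odlyzko {n : ℕ} (W : Submodule ℝ (Option (Fin n) → ℝ)) (X : Finset (Fin n → Bool))
    (hX : ∀ x ∈ X, rv x ∈ W) : 2 * X.card ≤ 2 ^ Module.finrank ℝ W := by
  classical
  let c : Option (Fin n) → Module.Dual ℝ W := fun o => (LinearMap.proj o).comp W.subtype
  obtain ⟨f, hf, hspan, -⟩ := Submodule.exists_fun_fin_finrank_span_eq ℝ (Set.range c)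
  choose g hg using hf
  have hd : Module.finrank ℝ (Submodule.span ℝ (Set.range c)) ≤ Module.finrank ℝ W :=
    (Submodule.finrank_le _).trans (Subspace.dual_finrank_eq).le
  have key : ∀ w ∈ W, (∀ i, w (g i) = 0) → w = 0 := by
    intro w hw h0
    funext o
    have ho : c o ∈ Submodule.span ℝ (Set.range f) := by
      rw [hspan]; exact Submodule.subset_span ⟨o, rfl⟩
    have hker : Submodule.span ℝ (Set.range f) ≤
        LinearMap.ker (Module.Dual.eval ℝ W ⟨w, hw⟩) := by
      rw [Submodule.span_le]
      rintro _ ⟨i, rfl⟩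
      have := h0 i
      simp only [SetLike.mem_coe, LinearMap.mem_ker, Module.Dual.eval_apply]
      rw [← hg i]; exact this
    have := hker ho
    simpa [c] using this
  let sg : Bool → ℝ := fun b => if b then -1 else 1
  have hsg : ∀ b x o, sg b * rv (n := n) x o = 1 ∨ sg b * rv x o = -1 := by
    intro b x o
    rcases rv_cases x o with h | h <;> cases b <;> simp [sg, h]
  let F : Bool × (Fin n → Bool) →
      (Fin (Module.finrank ℝ (Submodule.span ℝ (Set.range c))) → Bool) :=
    fun q i => decide (sg q.1 * rv q.2 (g i) = 1)
  have hcard : ((Finset.univ : Finset Bool) ×ˢ X).card ≤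
      (Finset.univ : Finset (Fin (Module.finrank ℝ
        (Submodule.span ℝ (Set.range c))) → Bool)).card := by
    apply Finset.card_le_card_of_injOn F (fun _ _ => Finset.mem_coe.2 (Finset.mem_univ _))
    rintro ⟨b, x⟩ hx ⟨b', x'⟩ hx' he
    simp only [Finset.coe_product, Set.mem_prod, Finset.mem_coe] at hx hx'
    have hz : sg b • rv x - sg b' • rv x' = 0 := by
      apply key
      · exact W.sub_mem (W.smul_mem _ (hX _ hx.2)) (W.smul_mem _ (hX _ hx'.2))
      · intro i
        have h := congrFun he i
        simp only [F, decide_eq_decide] at h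
        simp only [Pi.sub_apply, Pi.smul_apply, smul_eq_mul]
        rcases hsg b x (g i) with h1 | h1
        · rw [h1, h.1 h1]; simp
        · rcases hsg b' x' (g i) with h2 | h2
          · have := h.2 h2; rw [h1] at this; norm_num at this
          · rw [h1, h2]; simp
    have hb : b = b' := by
      have := congrFun hz none
      cases b <;> cases b' <;> simp [sg, rv] at this ⊢ <;> norm_num at this
    subst hb
    have hsb : sg b ≠ 0 := by cases b <;> simp [sg]
    rw [← smul_sub] at hz
    have := (smul_eq_zero.1 hz).resolve_left hsb
    rw [rv_injective (sub_eq_zero.1 this)]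
  simp only [Finset.card_product, Finset.card_univ, Fintype.card_bool, Fintype.card_fun,
    Fintype.card_fin] at hcard
  exact hcard.trans (Nat.pow_le_pow_right (by norm_num) hd)

/-- The weighted bilinear form. -/
def wB {n : ℕ} (p : Option (Fin n) → ℝ) : LinearMap.BilinForm ℝ (Option (Fin n) → ℝ) :=
  LinearMap.mk₂ ℝ (fun w z => ∑ o, p o * w o * z o)
    (by intro a b c; simp [mul_add, add_mul, Finset.sum_add_distrib])
    (by intro r a b; simp only [Pi.smul_apply, smul_eq_mul, Finset.mul_sum]
        exact Finset.sum_congr rfl fun _ _ => by ring)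
    (by intro a b c; simp [mul_add, Finset.sum_add_distrib])
    (by intro r a b; simp only [Pi.smul_apply, smul_eq_mul, Finset.mul_sum]
        exact Finset.sum_congr rfl fun _ _ => by ring)

lemma wB_apply {n : ℕ} (p : Option (Fin n) → ℝ) (w z : Option (Fin n) → ℝ) :
    wB p w z = ∑ o, p o * w o * z o := rfl

lemma wB_comm {n : ℕ} (p : Option (Fin n) → ℝ) (w z : Option (Fin n) → ℝ) :
    wB p w z = wB p z w := by
  simp only [wB_apply]
  exact Finset.sum_congr rfl fun _ _ => by ring

lemma wB_self {n : ℕ} (p : Option (Fin n) → ℝ) (hs : ∑ o, p o = 1) (x : Fin n → Bool) :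
    wB p (rv x) (rv x) = 1 := by
  simp only [wB_apply, mul_assoc, rv_sq, mul_one, hs]

lemma pow_arith (a b c n : ℕ) (ha : c + 1 ≤ a) (hb : c + 1 ≤ b) (hab : a + b ≤ n + 1 + c) :
    2 ^ a + 2 ^ b ≤ 2 ^ n + 2 ^ (c + 1) := by
  obtain ⟨u, rfl⟩ := Nat.exists_eq_add_of_le ha
  obtain ⟨v, rfl⟩ := Nat.exists_eq_add_of_le hb
  have h1 : (2:ℕ) ^ (c + 1 + u + v) ≤ 2 ^ n := Nat.pow_le_pow_right (by norm_num) (by omega)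
  have hu : 1 ≤ 2 ^ u := Nat.one_le_two_pow
  have hv : 1 ≤ 2 ^ v := Nat.one_le_two_pow
  obtain ⟨U, hU⟩ := Nat.exists_eq_add_of_le hu
  obtain ⟨V, hV⟩ := Nat.exists_eq_add_of_le hv
  rw [pow_add, pow_add _ _ u, hU, hV] at h1
  rw [pow_add _ _ u, pow_add _ _ v, hU, hV]
  have : 0 ≤ 2 ^ (c+1) * (U * V) := Nat.zero_le _
  nlinarith

lemma count_bound {n k : ℕ} (hn : 1 ≤ n) (hkn : k ≤ n) (p : Option (Fin n) → ℝ)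
    (hs : ∑ o, p o = 1)
    (hk : k ≤ (Finset.univ.filter (fun i : Fin n => p (some i) ≠ 0)).card)
    (X Y : Finset (Fin n → Bool)) (hX : X.Nonempty) (hY : Y.Nonempty)
    (hXY : ∀ x ∈ X, ∀ y ∈ Y, wB p (rv x) (rv y) = 0) :
    X.card + Y.card ≤ 2 ^ (n - 1) + 2 ^ (n + 1 - k) := by
  classical
  let B := wB p
  have hrefl : B.IsRefl := fun w z h => by
    have : wB p w z = 0 := h
    rw [wB_comm] at this; exact this
  let K : Submodule ℝ (Option (Fin n) → ℝ) := B.orthogonal ⊤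
  let V1 : Submodule ℝ (Option (Fin n) → ℝ) := Submodule.span ℝ (rv '' (Y : Set _)) ⊔ K
  let V0 : Submodule ℝ (Option (Fin n) → ℝ) := B.orthogonal V1
  have hdim : Module.finrank ℝ V1 + Module.finrank ℝ V0 = (n + 1) + Module.finrank ℝ K := by
    have h := LinearMap.BilinForm.finrank_add_finrank_orthogonal hrefl V1
    have h2 : V1 ⊓ B.orthogonal ⊤ = K := inf_eq_right.2 le_sup_right
    rw [h2] at h
    simpa using h
  have hnK : ∀ x, rv x ∉ K := by
    intro x hx
    have := hx (rv x) Submodule.mem_top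
    have h1 := wB_self p hs x
    have h2 : wB p (rv x) (rv x) = 0 := this
    linarith
  have hYV : ∀ y ∈ Y, rv y ∈ V1 := fun y hy =>
    Submodule.mem_sup_left (Submodule.subset_span ⟨y, hy, rfl⟩)
  have hXV : ∀ x ∈ X, rv x ∈ V0 := by
    intro x hx
    have : V1 ≤ LinearMap.ker (B (rv x)) := by
      refine sup_le ?_ ?_
      · rw [Submodule.span_le]
        rintro _ ⟨y, hy, rfl⟩
        exact hXY x hx y hy
      · intro z hz
        exact hz (rv x) Submodule.mem_top
    intro z hz
    exact hrefl _ _ (this hz)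
  have hK0 : K < V0 := by
    refine lt_of_le_of_ne (fun z hz w _ => hz w Submodule.mem_top) ?_
    rintro h
    obtain ⟨x, hx⟩ := hX
    exact hnK x (h ▸ hXV x hx)
  have hK1 : K < V1 := by
    refine lt_of_le_of_ne le_sup_right ?_
    rintro h
    obtain ⟨x, hx⟩ := hY
    exact hnK x (h ▸ hYV x hx)
  have h0 := Submodule.finrank_lt_finrank_of_lt hK0
  have h1 := Submodule.finrank_lt_finrank_of_lt hK1
  have hKc : Module.finrank ℝ K + k ≤ n + 1 := by
    let L : K →ₗ[ℝ] ({o : Option (Fin n) // p o = 0} → ℝ) :=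
      (LinearMap.funLeft ℝ ℝ Subtype.val).comp K.subtype
    have hL : Function.Injective L := by
      rw [← LinearMap.ker_eq_bot, LinearMap.ker_eq_bot']
      rintro ⟨w, hw⟩ h
      ext o
      by_cases ho : p o = 0
      · exact congrFun h ⟨o, ho⟩
      · have := hw (Pi.single o 1) Submodule.mem_top
        have h2 : wB p (Pi.single o 1) w = 0 := this
        rw [wB_apply, Finset.sum_eq_single o] at h2
        · simpa [ho] using h2
        · intro b _ hb; simp [Pi.single_eq_of_ne hb]
        · simp
    have h2 := LinearMap.finrank_le_finrank_of_injective hL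
    rw [Module.finrank_fintype_fun_eq_card, Fintype.card_subtype] at h2
    have h3 := Finset.card_filter_add_card_filter_not (s := (Finset.univ : Finset (Option (Fin n))))
      (fun o => p o = 0)
    have h4 : (Finset.univ.filter (fun i : Fin n => p (some i) ≠ 0)).card ≤
        (Finset.univ.filter (fun o : Option (Fin n) => ¬ p o = 0)).card := by
      apply Finset.card_le_card_of_injOn some
      · intro i hi; simpa using hi
      · exact (Option.some_injective _).injOn
    simp only [Finset.card_univ, Fintype.card_option, Fintype.card_fin] at h3
    omega
  have hx := odlyzko V0 X hXV
  have hy := odlyzko V1 Y hYV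
  have hp := pow_arith _ _ _ n h0 h1 (by omega)
  have hq : 2 ^ (Module.finrank ℝ K) ≤ 2 ^ (n + 1 - k) :=
    Nat.pow_le_pow_right (by norm_num) (by omega)
  have hn2 : 2 ^ n = 2 * 2 ^ (n - 1) := by
    rw [← pow_succ']; congr 1; omega
  rw [hn2, pow_succ] at hp
  omega

/-- Choosing a spanning tuple. -/
lemma exists_tuple {n : ℕ} (S : Set (Fin n → Bool)) (hS : S.Nonempty)
    (hr : Module.finrank ℝ (Submodule.span ℝ (rv '' S)) ≤ n) :
    ∃ t : Fin n → (Fin n → Bool), (∀ i, t i ∈ S) ∧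
      ∀ x ∈ S, rv x ∈ Submodule.span ℝ (Set.range (fun i => rv (t i))) := by
  obtain ⟨f, hf, hspan, -⟩ := Submodule.exists_fun_fin_finrank_span_eq ℝ (rv '' S)
  choose g hgS hg using hf
  obtain ⟨x0, hx0⟩ := hS
  refine ⟨fun i => if h : i.1 < Module.finrank ℝ (Submodule.span ℝ (rv '' S)) then g ⟨i, h⟩
    else x0, ?_, ?_⟩
  · intro i
    dsimp only
    split_ifs
    · exact hgS _
    · exact hx0
  · intro x hx
    have h : rv x ∈ Submodule.span ℝ (Set.range f) := by
      rw [hspan]; exact Submodule.subset_span ⟨x, hx, rfl⟩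
    refine Submodule.span_mono ?_ h
    rintro _ ⟨i, rfl⟩
    exact ⟨⟨i, i.2.trans_le hr⟩, by simp [hg]⟩

end

noncomputable section

lemma factor_degree {n : ℕ} (b : Bool) (i j : Fin n) :
    MvPolynomial.degreeOf j (if b then MvPolynomial.X i else 1 - MvPolynomial.X i :
      MvPolynomial (Fin n) ℝ) ≤ if i = j then 1 else 0 := by
  have hX : MvPolynomial.degreeOf j (MvPolynomial.X i : MvPolynomial (Fin n) ℝ) ≤
      if i = j then 1 else 0 := by
    rw [MvPolynomial.degreeOf_X]; simp only [eq_comm]; exact le_rfl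
  cases b
  · simp only [Bool.false_eq_true, if_false]
    refine (MvPolynomial.degreeOf_sub_le _ _ _).trans (max_le ?_ hX)
    rw [MvPolynomial.degreeOf_one]; exact Nat.zero_le _
  · simpa using hX

/-- A function determined by the bits in `I` on `D` depends on at most `#I` bits. -/
lemma depends_le {n k : ℕ} {D : Set (Fin n → Bool)} {f : (Fin n → Bool) → Bool}
    (h : DependsOnBits D f k) (I : Finset (Fin n))
    (hI : ∀ x ∈ D, ∀ y ∈ D, f x = false → f y = true → ∃ i ∈ I, x i ≠ y i) :
    k ≤ I.card := by
  classical
  let q : Finset (Fin n) → Fin n → MvPolynomial (Fin n) ℝ := fun T i =>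
    if decide (i ∈ T) then MvPolynomial.X i else 1 - MvPolynomial.X i
  let P : MvPolynomial (Fin n) ℝ :=
    ∑ T ∈ I.powerset.filter (fun T => ∃ y ∈ D, f y = true ∧ ∀ i ∈ I, i ∈ T ↔ y i = true),
      ∏ i ∈ I, q T i
  have hdeg : ∀ j, MvPolynomial.degreeOf j P ≤ if j ∈ I then 1 else 0 := by
    intro j
    refine (MvPolynomial.degreeOf_sum_le _ _ _).trans (Finset.sup_le fun T _ => ?_)
    refine (MvPolynomial.degreeOf_prod_le _ _ _).trans ?_
    refine (Finset.sum_le_sum fun i _ => factor_degree _ i j).trans ?_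
    simp
  have heval : ∀ x ∈ D, ∀ T ∈ I.powerset,
      MvPolynomial.eval (fun i => if x i then (1 : ℝ) else 0) (∏ i ∈ I, q T i) =
        if T = I.filter (fun i => x i = true) then 1 else 0 := by
    intro x _ T hT
    rw [map_prod]
    split_ifs with hTx
    · apply Finset.prod_eq_one
      intro i hi
      cases hxi : x i <;> simp [q, hTx, hi, hxi]
    · have : ∃ i ∈ I, ¬ (i ∈ T ↔ x i = true) := by
        by_contra hc
        push Not at hc
        apply hTx
        ext i
        rw [Finset.mem_filter]
        constructor
        · intro hi; exact ⟨Finset.mem_powerset.1 hT hi, (hc i (Finset.mem_powerset.1 hT hi)).1 hi⟩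
        · rintro ⟨hi, hx⟩; exact (hc i hi).2 hx
      obtain ⟨i, hi, hne⟩ := this
      apply Finset.prod_eq_zero hi
      by_cases hiT : i ∈ T <;> cases hxi : x i <;> simp [q, hiT, hxi] at hne ⊢
  have hrep : Represents P D f := by
    intro x hx
    simp only [P]
    rw [map_sum, Finset.sum_congr rfl (fun T hT => heval x hx T (Finset.mem_filter.1 hT).1),
      Finset.sum_ite_eq']
    congr 1
    simp only [Finset.mem_filter, Finset.mem_powerset, Finset.filter_subset, true_and, eq_iff_iff]
    constructor
    · rintro ⟨y, hy, hfy, hxy⟩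
      by_contra hfx
      obtain ⟨i, hi, hne⟩ := hI x hx y hy (by simpa using hfx) hfy
      have := hxy i hi
      simp only [hi, true_and] at this
      exact hne (Bool.eq_iff_iff.2 this)
    · intro hfx
      exact ⟨x, hx, hfx, fun i hi => by simp [hi]⟩
  have hvars : P.vars ⊆ I := by
    intro j hj
    by_contra hjI
    have h0 := hdeg j
    rw [if_neg hjI] at h0
    rw [MvPolynomial.vars_def, Multiset.mem_toFinset, ← Multiset.count_pos] at hj
    rw [MvPolynomial.degreeOf_def] at h0
    omega
  refine (h.2 ⟨P, ?_, hrep, rfl⟩).trans (Finset.card_le_card hvars)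
  intro j
  refine (hdeg j).trans ?_
  split_ifs <;> simp

lemma vecNormSq_dot {ι : Type*} [Fintype ι] (v : ι → ℂ) :
    ((vecNormSq v : ℝ) : ℂ) = dotProduct (star v) v := by
  simp [vecNormSq, dotProduct, Complex.normSq_eq_conj_mul_self]

lemma vecNormSq_eq_zero {ι : Type*} [Fintype ι] {v : ι → ℂ} (h : vecNormSq v = 0) : v = 0 := by
  funext i
  have := (Finset.sum_eq_zero_iff_of_nonneg (fun i _ => Complex.normSq_nonneg (v i))).1 h i
    (Finset.mem_univ i)
  exact Complex.normSq_eq_zero.1 this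

lemma dot_mulVec {ι : Type*} [Fintype ι] (M : Matrix ι ι ℂ) (a b : ι → ℂ) :
    dotProduct (star (M.mulVec a)) b = dotProduct (star a) (M.conjTranspose.mulVec b) := by
  rw [Matrix.star_mulVec, ← Matrix.dotProduct_mulVec]

lemma exists_weights {n : ℕ} {D : Set (Fin n → Bool)} {f : (Fin n → Bool) → Bool}
    (h : ComputedExactly1 D f) :
    ∃ p : Option (Fin n) → ℝ, ∑ o, p o = 1 ∧
      ∀ x ∈ D, ∀ y ∈ D, f x = false → f y = true → wB p (rv x) (rv y) = 0 := by
  obtain ⟨m, -, ψ, hψ, U0, U1, P, hU0, hU1, hPh, hPP, hf⟩ := h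
  have hunit : ∀ U ∈ Matrix.unitaryGroup (Option (Fin n) × Fin m) ℂ, ∀ a b,
      dotProduct (star (U.mulVec a)) (U.mulVec b) = dotProduct (star a) b := by
    intro U hU a b
    have := Matrix.mem_unitaryGroup_iff'.1 hU
    rw [dot_mulVec, Matrix.mulVec_mulVec, ← Matrix.star_eq_conjTranspose, this, Matrix.one_mulVec]
  set u := U0.mulVec ψ with hu
  have hO : ∀ x y, dotProduct (star ((oracleMat n m x).mulVec u)) ((oracleMat n m y).mulVec u) =
      ((∑ o, (∑ j, Complex.normSq (u (o, j))) * rv x o * rv y o : ℝ) : ℂ) := by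
    intro x y
    simp only [dotProduct, oracleMat, Matrix.mulVec_diagonal, Pi.star_apply]
    rw [Fintype.sum_prod_type]
    push_cast
    refine Finset.sum_congr rfl fun o _ => ?_
    rw [Finset.sum_mul, Finset.sum_mul]
    refine Finset.sum_congr rfl fun j _ => ?_
    rw [Complex.normSq_eq_conj_mul_self]
    cases o with
    | none => simp [rv]
    | some i => cases hx : x i <;> cases hy : y i <;> simp [rv, hx, hy]
  have hsum : ∑ o, (∑ j, Complex.normSq (u (o, j))) = 1 := by
    have h1 : vecNormSq u = 1 := by
      have := hunit U0 hU0 ψ ψ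
      rw [← hu, ← vecNormSq_dot, ← vecNormSq_dot, hψ] at this
      exact_mod_cast this
    rw [← h1, vecNormSq, Fintype.sum_prod_type]
  refine ⟨fun o => ∑ j, Complex.normSq (u (o, j)), hsum, ?_⟩
  intro x hx y hy hfx hfy
  let φ : (Fin n → Bool) → Option (Fin n) × Fin m → ℂ := fun z =>
    U1.mulVec ((oracleMat n m z).mulVec u)
  have hφ : ∀ z, (P * U1 * oracleMat n m z * U0).mulVec ψ = P.mulVec (φ z) := by
    intro z
    simp only [φ, hu, Matrix.mulVec_mulVec, Matrix.mul_assoc]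
  have hφφ : ∀ z w, dotProduct (star (φ z)) (φ w) =
      ((∑ o, (∑ j, Complex.normSq (u (o, j))) * rv z o * rv w o : ℝ) : ℂ) := by
    intro z w
    rw [hunit U1 hU1, hO]
  have hx0 : P.mulVec (φ x) = 0 := by
    have := hf x hx
    rw [hφ, hfx] at this
    exact vecNormSq_eq_zero (by simpa using this)
  have hy1 : dotProduct (star (P.mulVec (φ y))) (P.mulVec (φ y)) = 1 := by
    have := hf y hy
    rw [hφ, hfy] at this
    rw [← vecNormSq_dot, this]; simp
  have hPy : dotProduct (star (φ y)) (P.mulVec (φ y)) = 1 := by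
    rw [dot_mulVec, hPh.eq, Matrix.mulVec_mulVec, hPP] at hy1
    exact hy1
  have hPy' : dotProduct (star (P.mulVec (φ y))) (φ y) = 1 := by
    rw [dot_mulVec, hPh.eq]; exact hPy
  have hyy : dotProduct (star (φ y)) (φ y) = 1 := by
    rw [hφφ]
    simp only [mul_assoc, rv_sq, mul_one, hsum]; simp
  have hfix : φ y - P.mulVec (φ y) = 0 := by
    apply vecNormSq_eq_zero
    have : ((vecNormSq (φ y - P.mulVec (φ y)) : ℝ) : ℂ) = 0 := by
      rw [vecNormSq_dot, star_sub, sub_dotProduct, dotProduct_sub, dotProduct_sub, hyy, hPy,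
        hPy', hy1]; simp
    exact_mod_cast this
  have horth : dotProduct (star (φ x)) (φ y) = 0 := by
    rw [sub_eq_zero.1 hfix, ← hPh.eq, ← dot_mulVec, hx0]; simp
  rw [hφφ] at horth
  rw [wB_apply]
  exact_mod_cast horth

end

noncomputable section

/-- Cube points in the span of a tuple. -/
def cl {n : ℕ} (t : Fin n → (Fin n → Bool)) : Finset (Fin n → Bool) := by
  classical
  exact Finset.univ.filter (fun x => rv x ∈ Submodule.span ℝ (Set.range (fun i => rv (t i))))

lemma mem_cl {n : ℕ} (t : Fin n → (Fin n → Bool)) (x : Fin n → Bool) :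
    x ∈ cl t ↔ rv x ∈ Submodule.span ℝ (Set.range (fun i => rv (t i))) := by
  simp [cl]

lemma finrank_le_of_orth {n : ℕ} (p : Option (Fin n) → ℝ) (hs : ∑ o, p o = 1)
    (S : Set (Fin n → Bool)) (y : Fin n → Bool) (hS : ∀ x ∈ S, wB p (rv x) (rv y) = 0) :
    Module.finrank ℝ (Submodule.span ℝ (rv '' S)) ≤ n := by
  have hle : Submodule.span ℝ (rv '' S) ≤ LinearMap.ker (wB p (rv y)) := by
    rw [Submodule.span_le]
    rintro _ ⟨x, hx, rfl⟩
    have := hS x hx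
    rw [wB_comm] at this
    exact this
  have hlt : Submodule.span ℝ (rv '' S) < ⊤ := by
    rw [lt_top_iff_ne_top]
    intro h
    have : rv y ∈ Submodule.span ℝ (rv '' S) := h ▸ Submodule.mem_top
    have h0 : wB p (rv y) (rv y) = 0 := hle this
    rw [wB_self p hs] at h0
    norm_num at h0
  have := Submodule.finrank_lt hlt.ne
  simp at this
  omega

lemma cl_orth {n : ℕ} (p : Option (Fin n) → ℝ) (s t : Fin n → (Fin n → Bool))
    (h : ∀ i j, wB p (rv (s i)) (rv (t j)) = 0) :
    ∀ x ∈ cl s, ∀ y ∈ cl t, wB p (rv x) (rv y) = 0 := by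
  have h1 : ∀ x ∈ cl s, ∀ j, wB p (rv x) (rv (t j)) = 0 := by
    intro x hx j
    have hle : Submodule.span ℝ (Set.range (fun i => rv (s i))) ≤
        LinearMap.ker (wB p (rv (t j))) := by
      rw [Submodule.span_le]
      rintro _ ⟨i, rfl⟩
      have := h i j
      rw [wB_comm] at this
      exact this
    rw [wB_comm]
    exact hle ((mem_cl _ _).1 hx)
  intro x hx y hy
  have hle : Submodule.span ℝ (Set.range (fun i => rv (t i))) ≤
      LinearMap.ker (wB p (rv x)) := by
    rw [Submodule.span_le]
    rintro _ ⟨j, rfl⟩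
    exact h1 x hx j
  exact hle ((mem_cl _ _).1 hy)

/-- Every counted function is captured by a good pair of tuples. -/
lemma capture {n k : ℕ} (hn : 1 ≤ n) (hk : 1 ≤ k) (hkn : k ≤ n)
    (F : (Fin n → Bool) → Option Bool)
    (hd : DependsOnBits {x | F x ≠ none} (fun x => (F x).getD false) k)
    (hc : ComputedExactly1 {x | F x ≠ none} (fun x => (F x).getD false)) :
    ∃ s t : Fin n → (Fin n → Bool),
      (cl s).card + (cl t).card ≤ 2 ^ (n - 1) + 2 ^ (n + 1 - k) ∧
      (∀ x, F x = some false → x ∈ cl s) ∧ (∀ x, F x = some true → x ∈ cl t) := by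
  classical
  obtain ⟨p, hs, hp⟩ := exists_weights hc
  have hp' : ∀ x y, F x = some false → F y = some true → wB p (rv x) (rv y) = 0 := by
    intro x y hx hy
    exact hp x (by simp [hx]) y (by simp [hy]) (by simp [hx]) (by simp [hy])
  have hval : ∀ x, F x ≠ none → ∀ b, (F x).getD false = b → F x = some b := by
    intro x hx b hb
    cases hF : F x with
    | none => exact absurd hF hx
    | some c => simp [hF] at hb; rw [hb]
  have hne : (∃ x, F x = some false) ∧ (∃ x, F x = some true) := by
    by_contra hcon
    have := depends_le hd ∅ (by
      intro x hx y hy hfx hfy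
      exact absurd ⟨⟨x, hval x hx _ hfx⟩, ⟨y, hval y hy _ hfy⟩⟩ hcon)
    simp at this
    omega
  obtain ⟨⟨x0, hx0⟩, ⟨y0, hy0⟩⟩ := hne
  have hsupp : k ≤ (Finset.univ.filter (fun i : Fin n => p (some i) ≠ 0)).card := by
    apply depends_le hd
    intro x hx y hy hfx hfy
    by_contra hcon
    push Not at hcon
    have h0 := hp x hx y hy hfx hfy
    have h1 : wB p (rv x) (rv y) = wB p (rv x) (rv x) := by
      simp only [wB_apply]
      refine Finset.sum_congr rfl fun o _ => ?_
      cases o with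
      | none => simp [rv]
      | some i =>
        by_cases hpi : p (some i) = 0
        · simp [hpi]
        · simp [rv, hcon i (by simp [hpi])]
    rw [h1, wB_self p hs] at h0
    norm_num at h0
  obtain ⟨s, hsS, hsp⟩ := exists_tuple {x | F x = some false} ⟨x0, hx0⟩
    (finrank_le_of_orth p hs _ y0 fun x hx => hp' x y0 hx hy0)
  obtain ⟨t, htS, htp⟩ := exists_tuple {x | F x = some true} ⟨y0, hy0⟩
    (finrank_le_of_orth p hs _ x0 fun y hy => by rw [wB_comm]; exact hp' x0 y hx0 hy)
  refine ⟨s, t, ?_, fun x hx => (mem_cl _ _).2 (hsp x hx), fun x hx => (mem_cl _ _).2 (htp x hx)⟩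
  exact count_bound hn hkn p hs hsupp _ _ ⟨x0, (mem_cl _ _).2 (hsp x0 hx0)⟩
    ⟨y0, (mem_cl _ _).2 (htp y0 hy0)⟩ (cl_orth p s t fun i j => hp' _ _ (hsS i) (htS j))

/-- The number of partial functions with prescribed bounds on the two preimages. -/
lemma card_between {α : Type*} [Fintype α] [DecidableEq α] (A B : Finset α) :
    (Finset.univ.filter (fun F : α → Option Bool =>
      (∀ x, F x = some false → x ∈ A) ∧ (∀ x, F x = some true → x ∈ B))).card
      ≤ 2 ^ (A.card + B.card) := by
  rw [pow_add, ← Finset.card_powerset, ← Finset.card_powerset, ← Finset.card_product]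
  apply Finset.card_le_card_of_injOn (fun F : α → Option Bool =>
    (Finset.univ.filter (fun x => F x = some false), Finset.univ.filter (fun x => F x = some true)))
  · intro F hF
    simp only [Finset.coe_filter, Finset.mem_univ, true_and, Set.mem_ofPred_eq] at hF
    simp only [Finset.coe_product, Set.mem_prod, Finset.mem_coe, Finset.mem_powerset]
    exact ⟨fun x hx => hF.1 x (by simpa using hx), fun x hx => hF.2 x (by simpa using hx)⟩
  · intro F _ G _ h
    simp only [Prod.mk.injEq, Finset.ext_iff, Finset.mem_filter, Finset.mem_univ, true_and] at h
    funext x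
    have h1 := h.1 x
    have h2 := h.2 x
    rcases hF : F x with _ | _ | _ <;> rcases hG : G x with _ | _ | _ <;> simp_all

lemma nat_bound {n k : ℕ} (hn : 1 ≤ n) (hk : 1 ≤ k) (hkn : k ≤ n) :
    Set.ncard {F : (Fin n → Bool) → Option Bool |
        DependsOnBits {x | F x ≠ none} (fun x => (F x).getD false) k ∧
        ComputedExactly1 {x | F x ≠ none} (fun x => (F x).getD false)} ≤
      2 ^ (2 * n ^ 2) * 2 ^ (2 ^ (n - 1) + 2 ^ (n + 1 - k)) := by
  classical
  let Q : Finset ((Fin n → (Fin n → Bool)) × (Fin n → (Fin n → Bool))) :=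
    Finset.univ.filter (fun q => (cl q.1).card + (cl q.2).card ≤ 2 ^ (n - 1) + 2 ^ (n + 1 - k))
  let R := Q.biUnion (fun q => Finset.univ.filter (fun F : (Fin n → Bool) → Option Bool =>
      (∀ x, F x = some false → x ∈ cl q.1) ∧ (∀ x, F x = some true → x ∈ cl q.2)))
  have hsub : {F : (Fin n → Bool) → Option Bool |
        DependsOnBits {x | F x ≠ none} (fun x => (F x).getD false) k ∧
        ComputedExactly1 {x | F x ≠ none} (fun x => (F x).getD false)} ⊆ (R : Set _) := by
    rintro F ⟨hd, hc⟩
    obtain ⟨s, t, hst, h0, h1⟩ := capture hn hk hkn F hd hc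
    simp only [R, Finset.mem_coe, Finset.mem_biUnion]
    exact ⟨(s, t), by simpa [Q] using hst, by simpa using ⟨h0, h1⟩⟩
  refine (Set.ncard_le_ncard hsub R.finite_toSet).trans ?_
  rw [Set.ncard_coe_finset]
  refine (Finset.card_biUnion_le_card_mul Q _ (2 ^ (2 ^ (n - 1) + 2 ^ (n + 1 - k))) ?_).trans ?_
  · intro q hq
    exact (card_between _ _).trans
      (Nat.pow_le_pow_right (by norm_num) (Finset.mem_filter.1 hq).2)
  · apply Nat.mul_le_mul_right
    refine (Finset.card_le_univ _).trans (le_of_eq ?_)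
    simp only [Fintype.card_prod, Fintype.card_fun, Fintype.card_bool, Fintype.card_fin]
    rw [← pow_mul, ← pow_add]
    congr 1; ring

end

/-- Partial Boolean functions are identified with maps
`F : {0,1}^n → {0,1,*}` (with `*` encoded as `none`). -/
theorem stmt_11 (n k : ℕ) (hn : 3 ≤ n) (hk2 : 2 ≤ k) (hkn : k ≤ n) :
    (Set.ncard {F : (Fin n → Bool) → Option Bool |
        DependsOnBits {x | F x ≠ none} (fun x => (F x).getD false) k ∧
        ComputedExactly1 {x | F x ≠ none} (fun x => (F x).getD false)} : ℝ)
      ≤ (n : ℝ) ^ 2 *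
        2 ^ ((2 : ℝ) ^ ((n : ℝ) - 1) * (1 + (2 : ℝ) ^ ((2 : ℝ) - (k : ℝ)))
              + 2 * (n : ℝ) ^ 2) := by
  have hb := nat_bound (n := n) (k := k) (by omega) (by omega) hkn
  have hb' : (Set.ncard {F : (Fin n → Bool) → Option Bool |
        DependsOnBits {x | F x ≠ none} (fun x => (F x).getD false) k ∧
        ComputedExactly1 {x | F x ≠ none} (fun x => (F x).getD false)} : ℝ) ≤
      ((2 ^ (2 * n ^ 2) * 2 ^ (2 ^ (n - 1) + 2 ^ (n + 1 - k)) : ℕ) : ℝ) := by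
    exact_mod_cast hb
  refine hb'.trans ?_
  have hexp : (2 : ℝ) ^ ((n : ℝ) - 1) * (1 + (2 : ℝ) ^ ((2 : ℝ) - (k : ℝ))) + 2 * (n : ℝ) ^ 2 =
      ((2 * n ^ 2 + (2 ^ (n - 1) + 2 ^ (n + 1 - k)) : ℕ) : ℝ) := by
    rw [mul_add, mul_one, ← Real.rpow_add (by norm_num)]
    have e1 : (n : ℝ) - 1 = ((n - 1 : ℕ) : ℝ) := by
      rw [Nat.cast_sub (by omega)]; simp
    have e2 : (n : ℝ) - 1 + (2 - (k : ℝ)) = ((n + 1 - k : ℕ) : ℝ) := by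
      rw [Nat.cast_sub (by omega)]; push_cast; ring
    rw [e2, e1, Real.rpow_natCast, Real.rpow_natCast]
    push_cast
    ring
  rw [hexp, Real.rpow_natCast, ← pow_add]
  have h1 : (1 : ℝ) ≤ (n : ℝ) ^ 2 := by
    have : (1 : ℝ) ≤ (n : ℝ) := by exact_mod_cast (by omega : 1 ≤ n)
    nlinarith
  push_cast
  exact le_mul_of_one_le_left (by positivity) h1
end
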